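/- Let E and F be real Hilbert spaces, let c′ > 0, let A ⊆ E be an unbounded set with μ(A) ≥ 1/c′, and let f : A → F be an ε-nearisometry for some ε ≥ 0. Then there exist a linear isometry U : E → F and a vector w ∈ U(E) such that, with T x = U x + w (an isometry of E onto the closed linear subspace U(E) of F, translated by w ∈ U(E)) and P : F → U(E) the orthogonal projection, |P(f x) − T x| ≤ √2·c′·ε for all x ∈ A. -/

import Mathlib

open Filter Metric Bornology RealInnerProductSpace

/-- `f` is an `ε`-nearisometry on `A`. -/
def IsNearisometryOn {E F : Type*} [NormedAddCommGroup E] [NormedAddCommGroup F]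
    (f : E → F) (A : Set E) (ε : ℝ) : Prop :=
  ∀ x ∈ A, ∀ y ∈ A, |‖f x - f y‖ - ‖x - y‖| ≤ ε

/-- `u` is a cluster direction of `A`. -/
def IsClusterDirection {E : Type*} [NormedAddCommGroup E] [NormedSpace ℝ E]
    (A : Set E) (u : E) : Prop :=
  ∃ x : ℕ → E, (∀ j, x j ∈ A) ∧ Tendsto (fun j => ‖x j‖) atTop atTop ∧
    Tendsto (fun j => ‖x j‖⁻¹ • x j) atTop (nhds u)

/-- `μ(A) = μ₁(cd A)`, where `μ₁(X) = inf_{|e|=1} sup {|u ⬝ e| : u ∈ X}` (with `sup ∅ = 0`,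
as is the convention for `Real.sSup`). -/
noncomputable def muDir {E : Type*} [NormedAddCommGroup E] [InnerProductSpace ℝ E]
    (A : Set E) : ℝ :=
  sInf {s | ∃ e : E, ‖e‖ = 1 ∧
    s = sSup {t | ∃ u, IsClusterDirection A u ∧ t = abs ⟪u, e⟫}}

/-- The orthogonal projection of `F` onto the (closed) range `U(E)` of a linear isometry
`U : E →ₗᵢ[ℝ] F` from a complete space, as a map `F → F`. -/
noncomputable def projOntoRange {E F : Type*} [NormedAddCommGroup E] [NormedSpace ℝ E]
    [CompleteSpace E] [NormedAddCommGroup F] [InnerProductSpace ℝ F]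
    (U : E →ₗᵢ[ℝ] F) (v : F) : F :=
  haveI : CompleteSpace (⊤ : Submodule ℝ E) :=
    completeSpace_coe_iff_isComplete.2 (by simpa using completeSpace_iff_isComplete_univ.1 ‹_›)
  haveI : CompleteSpace (Submodule.map U.toLinearMap (⊤ : Submodule ℝ E)) :=
    U.completeSpace_map ⊤
  (Submodule.orthogonalProjectionOnto (Submodule.map U.toLinearMap ⊤) v : F)

/-!
If `x j` is a sequence in `A` escaping to infinity in the direction `u`, then `f (x j) / |x j|`
converges, and such limits have the same pairwise inner products as the directions themselves.
Since `μ(A) > 0` makes the span of the cluster directions dense, `u ↦ lim f (x j) / |x j|` extends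
to a linear isometry `U`. The Busemann functions `x ↦ lim (|x j - x| - |x j|)` are almost preserved
by `f`, which bounds by `2ε` the component along each cluster direction of every increment of
`g = U* ∘ f - id`. Hence `g` maps `A` to a set of diameter at most `2c'ε`, and the centre `c` of a
ball of radius `√2 c'ε` containing that set, given by Jung's theorem, yields `w = U c`.
-/

open Set Topology

lemma cauchySeq_of_tendsto_sq_norm_sub {G : Type*} [SeminormedAddCommGroup G] {x : ℕ → G}
    (h : Tendsto (fun p : ℕ × ℕ => ‖x p.1 - x p.2‖ ^ 2) (atTop ×ˢ atTop) (𝓝 0)) :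
    CauchySeq x := by
  rw [cauchySeq_iff_tendsto_dist_atTop_0, ← prod_atTop_atTop_eq]
  simpa [Function.comp_def, dist_eq_norm] using (Real.continuous_sqrt.tendsto 0).comp h

section StrongConvexity

variable {E : Type*} [NormedAddCommGroup E] [NormedSpace ℝ E]
  {s : Set E} {m : ℝ} {φ : E → ℝ}

lemma strongConvexOn_iSup {ι : Type*} [Nonempty ι] {φ : ι → E → ℝ}
    (hφ : ∀ i, StrongConvexOn s m (φ i)) (hbdd : ∀ x ∈ s, BddAbove (range fun i => φ i x)) :
    StrongConvexOn s m fun x => ⨆ i, φ i x := by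
  refine ⟨(hφ (Classical.arbitrary ι)).1, fun x hx y hy a b ha hb hab => ciSup_le fun i => ?_⟩
  refine ((hφ i).2 hx hy ha hb hab).trans ?_
  gcongr
  · exact le_ciSup (hbdd x hx) i
  · exact le_ciSup (hbdd y hy) i

lemma cauchySeq_of_strongConvexOn (hm : 0 < m) (hφ : StrongConvexOn s m φ) {ρ : ℝ}
    (hρ : ∀ x ∈ s, ρ ≤ φ x) {x : ℕ → E} (hxs : ∀ n, x n ∈ s)
    (hx : Tendsto (fun n => φ (x n)) atTop (𝓝 ρ)) : CauchySeq x := by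
  refine cauchySeq_of_tendsto_sq_norm_sub ?_
  have hmidpoint (p : ℕ × ℕ) :
      ‖x p.1 - x p.2‖ ^ 2 ≤ 4 / m * ((φ (x p.1) - ρ) + (φ (x p.2) - ρ)) := by
    have hab : (1 / 2 : ℝ) + 1 / 2 = 1 := by norm_num
    have hconv := hφ.2 (hxs p.1) (hxs p.2) (by norm_num) (by norm_num) hab
    have hmin := hρ _ (hφ.1 (hxs p.1) (hxs p.2) (by norm_num) (by norm_num) hab)
    simp only [smul_eq_mul] at hconv
    rw [div_mul_eq_mul_div, le_div_iff₀ hm]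
    linarith
  have hgap : Tendsto (fun n => φ (x n) - ρ) atTop (𝓝 0) := by
    simpa using hx.sub_const ρ
  refine squeeze_zero (fun p => sq_nonneg _) hmidpoint ?_
  simpa using ((hgap.comp tendsto_fst).add (hgap.comp tendsto_snd)).const_mul (4 / m)

theorem exists_isMinOn_of_strongConvexOn [CompleteSpace E] (hm : 0 < m)
    (hφ : StrongConvexOn s m φ) (hs : IsClosed s) (hne : s.Nonempty)
    (hlsc : LowerSemicontinuousOn φ s) (hbdd : BddBelow (φ '' s)) :
    ∃ c ∈ s, IsMinOn φ s c := by
  have hρ (x) (hx : x ∈ s) : sInf (φ '' s) ≤ φ x := csInf_le hbdd (mem_image_of_mem φ hx)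
  obtain ⟨y, -, hy, hys⟩ := exists_seq_tendsto_sInf (hne.image φ) hbdd
  choose x hxs hxy using hys
  have hx : Tendsto (fun n => φ (x n)) atTop (𝓝 (sInf (φ '' s))) := by simpa only [hxy] using hy
  obtain ⟨c, hc⟩ := cauchySeq_tendsto_of_complete (cauchySeq_of_strongConvexOn hm hφ hρ hxs hx)
  have hcs : c ∈ s := hs.mem_of_tendsto hc (.of_forall hxs)
  have hcρ : φ c ≤ sInf (φ '' s) := le_of_forall_lt fun r hr => by
    obtain ⟨r', hrr', hr'⟩ := exists_between hr
    have hev := (tendsto_nhdsWithin_iff.2 ⟨hc, .of_forall hxs⟩).eventually (hlsc c hcs r' hr')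
    exact hrr'.trans_le (ge_of_tendsto hx (hev.mono fun _ h => h.le))
  exact ⟨c, hcs, fun x hx => hcρ.trans (hρ x hx)⟩

lemma add_sq_norm_sub_le_of_strongConvexOn_of_isMinOn (hφ : StrongConvexOn s m φ) {c x : E}
    (hc : c ∈ s) (hmin : IsMinOn φ s c) (hx : x ∈ s) :
    φ c + m / 2 * ‖x - c‖ ^ 2 ≤ φ x := by
  have hsegment (t : ℝ) (ht : t ∈ Ioo 0 1) : φ c + (1 - t) * (m / 2 * ‖x - c‖ ^ 2) ≤ φ x := by
    have ht' : 0 ≤ 1 - t := sub_nonneg.2 ht.2.le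
    have hle := (hmin (hφ.1 hx hc ht.1.le ht' (by ring))).trans
      (hφ.2 hx hc ht.1.le ht' (by ring))
    simp only [smul_eq_mul] at hle
    refine le_of_mul_le_mul_left ?_ ht.1
    linarith
  have hlim : Tendsto (fun t : ℝ => φ c + (1 - t) * (m / 2 * ‖x - c‖ ^ 2)) (𝓝[>] 0)
      (𝓝 (φ c + (1 - 0) * (m / 2 * ‖x - c‖ ^ 2))) :=
    (Continuous.tendsto (by fun_prop) 0).mono_left nhdsWithin_le_nhds
  rw [sub_zero, one_mul] at hlim
  exact le_of_tendsto hlim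
    (eventually_of_mem (Ioo_mem_nhdsGT zero_lt_one) hsegment)

end StrongConvexity

section Jung

variable {H : Type*} [NormedAddCommGroup H] [InnerProductSpace ℝ H]

lemma strongConvexOn_sq_norm_sub (a : H) : StrongConvexOn univ 2 fun x => ‖x - a‖ ^ 2 := by
  refine ⟨convex_univ, fun x _ y _ α β _ _ hαβ => le_of_eq ?_⟩
  obtain rfl := eq_sub_of_add_eq hαβ
  have hcomb : (1 - β) • x + β • y - a = (1 - β) • (x - a) + β • (y - a) := by module
  have hsub : x - y = (x - a) - (y - a) := by abel
  simp only [smul_eq_mul]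
  rw [hcomb, hsub, norm_add_sq_real, norm_sub_sq_real (x - a), norm_smul, norm_smul, mul_pow,
    mul_pow, Real.norm_eq_abs, Real.norm_eq_abs, sq_abs, sq_abs, real_inner_smul_left,
    real_inner_smul_right]
  ring

/- The squared farthest distance `φ x = sup_{s ∈ S} |x - s|²` is `2`-strongly convex, so at its
minimizer `c` one has `φ c + |s - c|² ≤ φ s ≤ (diam S)²` for `s ∈ S`, while `|s - c|² ≤ φ c`. -/
theorem exists_subset_closedBall_diam_div_sqrt_two [CompleteSpace H] {S : Set H}
    (hS : IsBounded S) : ∃ c, S ⊆ closedBall c (diam S / √2) := by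
  rcases S.eq_empty_or_nonempty with rfl | hne
  · exact ⟨0, empty_subset _⟩
  have : Nonempty S := hne.to_subtype
  let φ : H → ℝ := fun x => ⨆ s : S, ‖x - s‖ ^ 2
  have hbdd (x : H) : BddAbove (range fun s : S => ‖x - s‖ ^ 2) := by
    obtain ⟨r, hr⟩ := hS.subset_closedBall x
    refine ⟨r ^ 2, forall_mem_range.2 fun s => ?_⟩
    gcongr
    simpa [dist_eq_norm'] using hr s.2
  have hφ : StrongConvexOn univ 2 φ :=
    strongConvexOn_iSup (fun s => strongConvexOn_sq_norm_sub (s : H)) fun x _ => hbdd x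
  have hlsc : LowerSemicontinuous φ :=
    lowerSemicontinuous_ciSup hbdd fun s => Continuous.lowerSemicontinuous (by fun_prop)
  have hnonneg : BddBelow (φ '' univ) :=
    ⟨0, forall_mem_image.2 fun x _ => Real.iSup_nonneg fun s => sq_nonneg _⟩
  obtain ⟨c, hc, hmin⟩ := exists_isMinOn_of_strongConvexOn two_pos hφ isClosed_univ univ_nonempty
    (hlsc.lowerSemicontinuousOn _) hnonneg
  refine ⟨c, fun s hs => ?_⟩
  have hgrowth := add_sq_norm_sub_le_of_strongConvexOn_of_isMinOn hφ hc hmin (mem_univ s)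
  have hdiam : φ s ≤ diam S ^ 2 := ciSup_le fun t => by
    gcongr
    simpa [dist_eq_norm] using dist_le_diam_of_mem hS hs t.2
  have hradius : ‖s - c‖ ^ 2 ≤ φ c := by
    rw [norm_sub_rev]
    exact le_ciSup (hbdd c) ⟨s, hs⟩
  rw [mem_closedBall, dist_eq_norm, le_div_iff₀ (by positivity)]
  refine le_of_sq_le_sq ?_ diam_nonneg
  rw [mul_pow, Real.sq_sqrt zero_le_two]
  linarith

end Jung

section GramMatrix

variable {𝕜 E F : Type*} [RCLike 𝕜] [NormedAddCommGroup E] [InnerProductSpace 𝕜 E]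
  [NormedAddCommGroup F] [InnerProductSpace 𝕜 F]

lemma norm_linearCombination_eq_of_inner_eq {ι : Type*} {p : ι → E} {q : ι → F}
    (h : ∀ i j, inner 𝕜 (q i) (q j) = inner 𝕜 (p i) (p j)) (m : ι →₀ 𝕜) :
    ‖Finsupp.linearCombination 𝕜 q m‖ = ‖Finsupp.linearCombination 𝕜 p m‖ := by
  simp only [norm_eq_sqrt_re_inner (𝕜 := 𝕜), Finsupp.linearCombination_apply, Finsupp.sum,
    sum_inner, inner_sum, inner_smul_left, inner_smul_right, h]

theorem exists_linearIsometry_of_inner_eq [CompleteSpace F] {ι : Type*} {p : ι → E} {q : ι → F}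
    (h : ∀ i j, inner 𝕜 (q i) (q j) = inner 𝕜 (p i) (p j))
    (hp : (Submodule.span 𝕜 (range p)).topologicalClosure = ⊤) :
    ∃ U : E →ₗᵢ[𝕜] F, ∀ i, U (p i) = q i := by
  have hdense : DenseRange (Finsupp.linearCombination 𝕜 p) := by
    rwa [← Submodule.dense_iff_topologicalClosure_eq_top, ← Finsupp.range_linearCombination] at hp
  have hnorm := norm_linearCombination_eq_of_inner_eq h
  let L := (Finsupp.linearCombination 𝕜 q).extendOfNorm (Finsupp.linearCombination 𝕜 p)
  have hL : ∀ m, L (Finsupp.linearCombination 𝕜 p m) = Finsupp.linearCombination 𝕜 q m :=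
    LinearMap.extendOfNorm_eq hdense ⟨1, fun m => by rw [hnorm, one_mul]⟩
  have hLnorm (x : E) : ‖L x‖ = ‖x‖ :=
    hdense.induction_on x (isClosed_eq (by fun_prop) (by fun_prop)) fun m => by rw [hL, hnorm]
  exact ⟨⟨L.toLinearMap, hLnorm⟩, fun i => by simpa using hL (Finsupp.single i 1)⟩

lemma cauchySeq_of_tendsto_inner {z : ℕ → E} {c : 𝕜}
    (h : Tendsto (fun p : ℕ × ℕ => inner 𝕜 (z p.1) (z p.2)) (atTop ×ˢ atTop) (𝓝 c)) :
    CauchySeq z := by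
  refine cauchySeq_of_tendsto_sq_norm_sub ?_
  have hre := (RCLike.continuous_re.tendsto c).comp h
  have hdiag : Tendsto (fun n => RCLike.re (inner 𝕜 (z n) (z n))) atTop (𝓝 (RCLike.re c)) :=
    hre.comp (tendsto_id.prodMk tendsto_id)
  have hlim : Tendsto (fun p : ℕ × ℕ => RCLike.re (inner 𝕜 (z p.1) (z p.1)) -
      2 * RCLike.re (inner 𝕜 (z p.1) (z p.2)) + RCLike.re (inner 𝕜 (z p.2) (z p.2)))
      (atTop ×ˢ atTop) (𝓝 (RCLike.re c - 2 * RCLike.re c + RCLike.re c)) :=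
    ((hdiag.comp tendsto_fst).sub (hre.const_mul 2)).add (hdiag.comp tendsto_snd)
  convert hlim using 2 with p
  · simp [norm_sub_sq (𝕜 := 𝕜)]
  · ring

end GramMatrix

section Direction

/-- `x` escapes to infinity along `l` with asymptotic direction `u`: the defining property of the
sequences that witness a cluster direction. -/
structure TendstoDirection {E ι : Type*} [NormedAddCommGroup E] [NormedSpace ℝ E]
    (x : ι → E) (l : Filter ι) (u : E) : Prop where
  tendsto_norm : Tendsto (fun i => ‖x i‖) l atTop
  tendsto_normalize : Tendsto (fun i => ‖x i‖⁻¹ • x i) l (𝓝 u)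

namespace TendstoDirection

variable {E ι : Type*} [NormedAddCommGroup E] [NormedSpace ℝ E]
  {x : ι → E} {l : Filter ι} {u : E}

lemma comp (hx : TendstoDirection x l u) {κ : Type*} {k : Filter κ} {g : κ → ι}
    (hg : Tendsto g k l) : TendstoDirection (x ∘ g) k u :=
  ⟨hx.tendsto_norm.comp hg, hx.tendsto_normalize.comp hg⟩

lemma tendsto_inv_norm (hx : TendstoDirection x l u) : Tendsto (fun i => ‖x i‖⁻¹) l (𝓝 0) :=
  tendsto_inv_atTop_zero.comp hx.tendsto_norm

lemma eventually_norm_pos (hx : TendstoDirection x l u) : ∀ᶠ i in l, 0 < ‖x i‖ :=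
  hx.tendsto_norm.eventually_gt_atTop 0

lemma norm_eq_one [l.NeBot] (hx : TendstoDirection x l u) : ‖u‖ = 1 := by
  refine tendsto_nhds_unique hx.tendsto_normalize.norm (tendsto_const_nhds.congr' ?_)
  filter_upwards [hx.eventually_norm_pos] with i hi
  rw [norm_smul, norm_inv, norm_norm, inv_mul_cancel₀ hi.ne']

end TendstoDirection

/- Rationalizing, `|z - x| - |z - y| = (2⟪z, y - x⟫ + |x|² - |y|²) / (|z - x| + |z - y|)`; scale
numerator and denominator by `r`. -/
theorem tendsto_norm_sub_sub_norm_sub {H ι : Type*} [NormedAddCommGroup H]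
    [InnerProductSpace ℝ H] {l : Filter ι} {r : ι → ℝ} {z : ι → H} {u : H}
    (hr : Tendsto r l (𝓝 0)) (hr0 : ∀ᶠ i in l, 0 < r i)
    (hz : Tendsto (fun i => r i • z i) l (𝓝 u)) (hu : ‖u‖ = 1) (x y : H) :
    Tendsto (fun i => ‖z i - x‖ - ‖z i - y‖) l (𝓝 ⟪u, y - x⟫) := by
  have hnorm (w : H) : Tendsto (fun i => ‖r i • z i - r i • w‖) l (𝓝 1) := by
    simpa [hu] using (hz.sub (hr.smul_const w)).norm
  have hden := (hnorm x).add (hnorm y)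
  have hnum : Tendsto (fun i => 2 * ⟪r i • z i, y - x⟫ + r i * (‖x‖ ^ 2 - ‖y‖ ^ 2)) l
      (𝓝 (2 * ⟪u, y - x⟫ + 0 * (‖x‖ ^ 2 - ‖y‖ ^ 2))) :=
    ((hz.inner tendsto_const_nhds).const_mul 2).add (hr.mul_const _)
  have hlim : (2 * ⟪u, y - x⟫ + 0 * (‖x‖ ^ 2 - ‖y‖ ^ 2)) / (1 + 1) = ⟪u, y - x⟫ := by ring
  rw [← hlim]
  refine (hnum.div hden (by norm_num)).congr' ?_
  filter_upwards [hr0, hden.eventually_const_lt (u := 0) (by norm_num)] with i hi hpos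
  rw [Pi.div_apply, div_eq_iff hpos.ne', ← smul_sub, ← smul_sub, norm_smul, norm_smul,
    Real.norm_of_nonneg hi.le, real_inner_smul_left, inner_sub_right]
  linear_combination r i * (norm_sub_sq_real (z i) y - norm_sub_sq_real (z i) x)

end Direction

section Mu

variable {E : Type*} [NormedAddCommGroup E] [InnerProductSpace ℝ E] {A : Set E}

theorem muDir_mul_norm_le {v : E} {K : ℝ} (hK : 0 ≤ K)
    (h : ∀ u, IsClusterDirection A u → |⟪u, v⟫| ≤ K) : muDir A * ‖v‖ ≤ K := by
  rcases eq_or_ne v 0 with rfl | hv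
  · simpa using hK
  have hvpos : 0 < ‖v‖ := norm_pos_iff.2 hv
  have hmu : muDir A ≤ sSup {t | ∃ u, IsClusterDirection A u ∧ t = |⟪u, ‖v‖⁻¹ • v⟫|} := by
    refine csInf_le ⟨0, ?_⟩ ⟨‖v‖⁻¹ • v, norm_smul_inv_norm hv, rfl⟩
    rintro _ ⟨e, -, rfl⟩
    refine Real.sSup_nonneg ?_
    rintro _ ⟨u, -, rfl⟩
    exact abs_nonneg _
  rw [← le_div_iff₀ hvpos]
  refine hmu.trans (Real.sSup_le ?_ (by positivity))
  rintro _ ⟨u, hu, rfl⟩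
  rw [real_inner_smul_right, abs_mul, abs_of_nonneg (by positivity), inv_mul_eq_div]
  gcongr
  exact h u hu

theorem topologicalClosure_span_isClusterDirection [CompleteSpace E] (hA : 0 < muDir A) :
    (Submodule.span ℝ {u | IsClusterDirection A u}).topologicalClosure = ⊤ := by
  rw [Submodule.topologicalClosure_eq_top_iff, Submodule.eq_bot_iff]
  intro v hv
  have horth (u : E) (hu : IsClusterDirection A u) : |⟪u, v⟫| ≤ 0 := by
    rw [(Submodule.mem_orthogonal _ v).1 hv u (Submodule.subset_span hu), abs_zero]
  exact norm_le_zero_iff.1 (nonpos_of_mul_nonpos_right (muDir_mul_norm_le le_rfl horth) hA)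

end Mu

lemma abs_sq_sub_sq_le {a b δ : ℝ} (hb : 0 ≤ b) (h : |a - b| ≤ δ) :
    |a ^ 2 - b ^ 2| ≤ δ * (2 * b + δ) := by
  have hsum : |a + b| ≤ 2 * b + δ := by
    rw [abs_le] at h ⊢
    constructor <;> linarith
  rw [sq_sub_sq, mul_comm, abs_mul]
  exact mul_le_mul h hsum (abs_nonneg _) ((abs_nonneg _).trans h)

section Nearisometry

variable {E F : Type*} [NormedAddCommGroup E] [InnerProductSpace ℝ E]
  [NormedAddCommGroup F] [InnerProductSpace ℝ F]

lemma abs_inner_sub_inner_le {p q : E} {p' q' : F} {δ : ℝ} (hp : |‖p'‖ - ‖p‖| ≤ δ)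
    (hq : |‖q'‖ - ‖q‖| ≤ δ) (hpq : |‖p' - q'‖ - ‖p - q‖| ≤ δ) :
    |⟪p', q'⟫ - ⟪p, q⟫| ≤ 2 * δ * (‖p‖ + ‖q‖ + δ) := by
  have hδ : 0 ≤ δ := (abs_nonneg _).trans hp
  have hp := abs_le.1 (abs_sq_sub_sq_le (norm_nonneg p) hp)
  have hq := abs_le.1 (abs_sq_sub_sq_le (norm_nonneg q) hq)
  have hpq := abs_le.1 (abs_sq_sub_sq_le (norm_nonneg (p - q)) hpq)
  have htri := mul_le_mul_of_nonneg_left (norm_sub_le p q) hδ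
  have hpolar := norm_sub_sq_real p q
  have hpolar' := norm_sub_sq_real p' q'
  rw [abs_le]
  constructor <;> linarith [sq_nonneg δ]

namespace IsNearisometryOn

variable {f : E → F} {A : Set E} {ε : ℝ}

lemma exists_abs_inner_sub_inner_le (hf : IsNearisometryOn f A ε) :
    ∃ δ, ∀ p ∈ A, ∀ q ∈ A, |⟪f p, f q⟫ - ⟪p, q⟫| ≤ 2 * δ * (‖p‖ + ‖q‖ + δ) := by
  rcases A.eq_empty_or_nonempty with rfl | ⟨a, ha⟩
  · exact ⟨0, fun p hp => hp.elim⟩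
  have hnorm (p) (hp : p ∈ A) : |‖f p‖ - ‖p‖| ≤ ε + ‖f a‖ + ‖a‖ := by
    have hdist := abs_le.1 (hf p hp a ha)
    rw [abs_le]
    constructor
    · linarith [norm_le_norm_sub_add p a, norm_sub_le (f p) (f a)]
    · linarith [norm_le_norm_sub_add (f p) (f a), norm_sub_le p a]
  refine ⟨ε + ‖f a‖ + ‖a‖, fun p hp q hq =>
    abs_inner_sub_inner_le (hnorm p hp) (hnorm q hq) ((hf p hp q hq).trans ?_)⟩
  rw [add_assoc]
  exact le_add_of_nonneg_right (by positivity)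

theorem tendsto_inner (hf : IsNearisometryOn f A ε) {ι : Type*} {l : Filter ι} {x y : ι → E}
    {u v : E} (hxA : ∀ i, x i ∈ A) (hyA : ∀ i, y i ∈ A) (hx : TendstoDirection x l u)
    (hy : TendstoDirection y l v) :
    Tendsto (fun i => ⟪‖x i‖⁻¹ • f (x i), ‖y i‖⁻¹ • f (y i)⟫) l (𝓝 ⟪u, v⟫) := by
  obtain ⟨δ, hδ⟩ := hf.exists_abs_inner_sub_inner_le
  have herror : Tendsto (fun i => ⟪‖x i‖⁻¹ • f (x i), ‖y i‖⁻¹ • f (y i)⟫ -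
      ⟪‖x i‖⁻¹ • x i, ‖y i‖⁻¹ • y i⟫) l (𝓝 0) := by
    have hbound : Tendsto (fun i => 2 * δ * (‖y i‖⁻¹ + ‖x i‖⁻¹ + ‖x i‖⁻¹ * ‖y i‖⁻¹ * δ)) l
        (𝓝 0) := by
      simpa using ((hy.tendsto_inv_norm.add hx.tendsto_inv_norm).add
        ((hx.tendsto_inv_norm.mul hy.tendsto_inv_norm).mul_const δ)).const_mul (2 * δ)
    refine squeeze_zero_norm' ?_ hbound
    filter_upwards [hx.eventually_norm_pos, hy.eventually_norm_pos] with i hxi hyi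
    calc ‖⟪‖x i‖⁻¹ • f (x i), ‖y i‖⁻¹ • f (y i)⟫ - ⟪‖x i‖⁻¹ • x i, ‖y i‖⁻¹ • y i⟫‖
        = ‖x i‖⁻¹ * ‖y i‖⁻¹ * |⟪f (x i), f (y i)⟫ - ⟪x i, y i⟫| := by
          simp only [real_inner_smul_left, real_inner_smul_right]
          rw [← mul_sub, ← mul_sub, ← mul_assoc, mul_comm ‖y i‖⁻¹, Real.norm_eq_abs, abs_mul,
            abs_of_nonneg (by positivity)]
      _ ≤ ‖x i‖⁻¹ * ‖y i‖⁻¹ * (2 * δ * (‖x i‖ + ‖y i‖ + δ)) := by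
          gcongr
          exact hδ _ (hxA i) _ (hyA i)
      _ = 2 * δ * (‖y i‖⁻¹ + ‖x i‖⁻¹ + ‖x i‖⁻¹ * ‖y i‖⁻¹ * δ) := by field_simp
  simpa using herror.add (hx.tendsto_normalize.inner hy.tendsto_normalize)

theorem inner_eq_inner_of_tendsto (hf : IsNearisometryOn f A ε) {ι : Type*} {l : Filter ι}
    [l.NeBot] {x y : ι → E} {u v : E} {q q' : F} (hxA : ∀ i, x i ∈ A) (hyA : ∀ i, y i ∈ A)
    (hx : TendstoDirection x l u) (hy : TendstoDirection y l v)
    (hq : Tendsto (fun i => ‖x i‖⁻¹ • f (x i)) l (𝓝 q))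
    (hq' : Tendsto (fun i => ‖y i‖⁻¹ • f (y i)) l (𝓝 q')) : ⟪q, q'⟫ = ⟪u, v⟫ :=
  tendsto_nhds_unique (hq.inner hq') (hf.tendsto_inner hxA hyA hx hy)

theorem exists_tendsto_smul [CompleteSpace F] (hf : IsNearisometryOn f A ε) {x : ℕ → E} {u : E}
    (hxA : ∀ j, x j ∈ A) (hx : TendstoDirection x atTop u) :
    ∃ q, Tendsto (fun j => ‖x j‖⁻¹ • f (x j)) atTop (𝓝 q) :=
  cauchySeq_tendsto_of_complete <| cauchySeq_of_tendsto_inner <|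
    hf.tendsto_inner (fun _ => hxA _) (fun _ => hxA _) (hx.comp tendsto_fst) (hx.comp tendsto_snd)

theorem exists_linearIsometry_tendsto [CompleteSpace F] (hf : IsNearisometryOn f A ε)
    (hA : (Submodule.span ℝ {u | IsClusterDirection A u}).topologicalClosure = ⊤) :
    ∃ U : E →ₗᵢ[ℝ] F, ∀ (x : ℕ → E) (u : E), (∀ j, x j ∈ A) → TendstoDirection x atTop u →
      Tendsto (fun j => ‖x j‖⁻¹ • f (x j)) atTop (𝓝 (U u)) := by
  let ι := {i : (ℕ → E) × E // (∀ j, i.1 j ∈ A) ∧ TendstoDirection i.1 atTop i.2}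
  choose q hq using fun i : ι => hf.exists_tendsto_smul i.2.1 i.2.2
  have hinner (i i' : ι) : ⟪q i, q i'⟫ = ⟪i.1.2, i'.1.2⟫ :=
    hf.inner_eq_inner_of_tendsto i.2.1 i'.2.1 i.2.2 i'.2.2 (hq i) (hq i')
  have hrange : range (fun i : ι => i.1.2) = {u | IsClusterDirection A u} := by
    ext u
    constructor
    · rintro ⟨⟨⟨x, u⟩, hxA, hx⟩, rfl⟩
      exact ⟨x, hxA, hx.tendsto_norm, hx.tendsto_normalize⟩
    · rintro ⟨x, hxA, hnorm, hdir⟩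
      exact ⟨⟨(x, u), hxA, hnorm, hdir⟩, rfl⟩
  obtain ⟨U, hU⟩ := exists_linearIsometry_of_inner_eq hinner (hrange ▸ hA)
  exact ⟨U, fun x u hxA hx => hU ⟨(x, u), hxA, hx⟩ ▸ hq ⟨(x, u), hxA, hx⟩⟩

theorem abs_inner_sub_inner_le_two_mul (hf : IsNearisometryOn f A ε) {ι : Type*} {l : Filter ι}
    [l.NeBot] {x : ι → E} {u : E} {q : F} (hxA : ∀ i, x i ∈ A) (hx : TendstoDirection x l u)
    (hq : Tendsto (fun i => ‖x i‖⁻¹ • f (x i)) l (𝓝 q)) {a b : E} (ha : a ∈ A)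
    (hb : b ∈ A) : |⟪q, f b - f a⟫ - ⟪u, b - a⟫| ≤ 2 * ε := by
  have hpos : ∀ᶠ i in l, 0 < ‖x i‖⁻¹ := hx.eventually_norm_pos.mono fun _ => inv_pos.2
  have hE := tendsto_norm_sub_sub_norm_sub hx.tendsto_inv_norm hpos hx.tendsto_normalize
    hx.norm_eq_one a b
  have hq1 : ‖q‖ = 1 := by
    rw [norm_eq_sqrt_real_inner, hf.inner_eq_inner_of_tendsto hxA hxA hx hx hq hq,
      ← norm_eq_sqrt_real_inner, hx.norm_eq_one]
  have hF := tendsto_norm_sub_sub_norm_sub hx.tendsto_inv_norm hpos hq hq1 (f a) (f b)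
  refine le_of_tendsto' (hF.sub hE).abs fun i => ?_
  have hia := abs_le.1 (hf _ (hxA i) a ha)
  have hib := abs_le.1 (hf _ (hxA i) b hb)
  rw [abs_le]
  constructor <;> linarith

theorem muDir_mul_dist_adjoint_sub_le [CompleteSpace E] [CompleteSpace F]
    (hf : IsNearisometryOn f A ε) {U : E →ₗᵢ[ℝ] F}
    (hU : ∀ (x : ℕ → E) (u : E), (∀ j, x j ∈ A) → TendstoDirection x atTop u →
      Tendsto (fun j => ‖x j‖⁻¹ • f (x j)) atTop (𝓝 (U u)))
    {a b : E} (ha : a ∈ A) (hb : b ∈ A) :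
    muDir A * dist (U.toContinuousLinearMap.adjoint (f b) - b)
      (U.toContinuousLinearMap.adjoint (f a) - a) ≤ 2 * ε := by
  have hε : 0 ≤ ε := (abs_nonneg _).trans (hf a ha a ha)
  rw [dist_eq_norm]
  refine muDir_mul_norm_le (by positivity) ?_
  rintro u ⟨x, hxA, hnorm, hdir⟩
  have hx : TendstoDirection x atTop u := ⟨hnorm, hdir⟩
  convert hf.abs_inner_sub_inner_le_two_mul hxA hx (hU x u hxA hx) ha hb using 2
  rw [sub_sub_sub_comm, ← map_sub, inner_sub_right, ContinuousLinearMap.adjoint_inner_right,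
    LinearIsometry.coe_toContinuousLinearMap]

end IsNearisometryOn

end Nearisometry

lemma projOntoRange_eq_adjoint {E F : Type*} [NormedAddCommGroup E] [InnerProductSpace ℝ E]
    [CompleteSpace E] [NormedAddCommGroup F] [InnerProductSpace ℝ F] [CompleteSpace F]
    (U : E →ₗᵢ[ℝ] F) (v : F) :
    projOntoRange U v = U (U.toContinuousLinearMap.adjoint v) := by
  have : CompleteSpace (⊤ : Submodule ℝ E) :=
    completeSpace_coe_iff_isComplete.2 (by simpa using completeSpace_iff_isComplete_univ.1 ‹_›)
  have : CompleteSpace (Submodule.map U.toLinearMap (⊤ : Submodule ℝ E)) :=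
    U.completeSpace_map ⊤
  refine Submodule.eq_starProjection_of_mem_of_inner_eq_zero ⟨_, trivial, rfl⟩ ?_
  rintro _ ⟨z, -, rfl⟩
  have hadjoint := U.toContinuousLinearMap.adjoint_inner_left z v
  simpa [inner_sub_left, sub_eq_zero] using hadjoint.symm

/-- Theorem 4.11: if `A ⊆ E` is unbounded with `μ(A) ≥ 1/c'` and `f : A → F` is an
`ε`-nearisometry, then there are a linear isometry `U : E → F` and `w ∈ U(E)` such that,
with `T x = U x + w` and `P : F → U(E)` the orthogonal projection,
`|P (f x) - T x| ≤ √2 c' ε` for all `x ∈ A`. -/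
theorem exists_isometry_approx_projection {E F : Type*}
    [NormedAddCommGroup E] [InnerProductSpace ℝ E] [CompleteSpace E]
    [NormedAddCommGroup F] [InnerProductSpace ℝ F] [CompleteSpace F]
    (c' : ℝ) (hc' : 0 < c') (A : Set E) (hA : ¬ IsBounded A) (hmu : 1 / c' ≤ muDir A)
    (f : E → F) (ε : ℝ) (hε : 0 ≤ ε) (hf : IsNearisometryOn f A ε) :
    ∃ U : E →ₗᵢ[ℝ] F, ∃ w ∈ Submodule.map U.toLinearMap (⊤ : Submodule ℝ E),
      ∀ x ∈ A, ‖projOntoRange U (f x) - (U x + w)‖ ≤ Real.sqrt 2 * c' * ε := by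
  have hmu_pos : 0 < muDir A := (one_div_pos.2 hc').trans_le hmu
  obtain ⟨U, hU⟩ :=
    hf.exists_linearIsometry_tendsto (topologicalClosure_span_isClusterDirection hmu_pos)
  let g : E → E := fun x => U.toContinuousLinearMap.adjoint (f x) - x
  have hdist : ∀ y ∈ g '' A, ∀ z ∈ g '' A, dist y z ≤ 2 * c' * ε := by
    rintro _ ⟨b, hb, rfl⟩ _ ⟨a, ha, rfl⟩
    have hle := (mul_le_mul_of_nonneg_right hmu dist_nonneg).trans
      (hf.muDir_mul_dist_adjoint_sub_le hU ha hb)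
    rw [one_div_mul_eq_div, div_le_iff₀ hc'] at hle
    linarith
  obtain ⟨c, hc⟩ := exists_subset_closedBall_diam_div_sqrt_two
    (isBounded_iff.2 ⟨_, fun y hy z hz => hdist y hy z hz⟩)
  refine ⟨U, U c, ⟨c, trivial, rfl⟩, fun x hx => ?_⟩
  calc ‖projOntoRange U (f x) - (U x + U c)‖ = dist (g x) c := by
        rw [projOntoRange_eq_adjoint, ← map_add, ← map_sub, U.norm_map, ← sub_sub, dist_eq_norm]
    _ ≤ diam (g '' A) / √2 := hc (mem_image_of_mem g hx)
    _ ≤ 2 * c' * ε / √2 := by gcongr; exact diam_le_of_forall_dist_le (by positivity) hdist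
    _ = √2 * c' * ε := by rw [mul_div_right_comm, mul_div_right_comm, Real.div_sqrt]
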